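/- In a matching market with unacceptable partners, the set of matched people is the same in every stable matching: if ν₁ and ν₂ are two stable partial matchings of the incomplete market on E, then exactly the same set of men and the same set of women are matched in ν₁ as in ν₂. -/

import Mathlib

/-!
Call an edge of `ν` improving over `ν'` for one of its ends if it is not in `ν'` and that end
prefers it to their situation under `ν'`. An edge of `ν` improving for the man would block `ν'`
unless the woman is matched in `ν'` and prefers that other edge, which is then improving over `ν`
for her; the same holds with the roles exchanged. So the women of the men's improving edges of `ν`
lie among the women of the women's improving edges of `ν'`, and the men of the latter lie among the
men of the former. Each edge set injects into both sides, so finiteness turns both inclusions into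
equalities. A man matched in `ν` only has an improving edge, hence would be matched in `ν'` as well.
-/

section

variable {Mn Wn : Type*} [Fintype Mn] [Fintype Wn]

/-- `ν` is a partial matching: a set of edges of `E`, no two of which share an endpoint. -/
def IsPartialMatching (E ν : Set (Mn × Wn)) : Prop :=
  ν ⊆ E ∧ ∀ e₁ ∈ ν, ∀ e₂ ∈ ν, (e₁.1 = e₂.1 ∨ e₁.2 = e₂.2) → e₁ = e₂

/-- A pair of `E` blocks `ν`: the man is unmatched or prefers the woman to his partner, and
the woman is unmatched or prefers the man to her partner.  The incomplete preference profile
is given by strict total orders `prefM m` on the neighborhood of `m` and `prefW w` on the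
neighborhood of `w`. -/
def Blocks (E : Set (Mn × Wn))
    (prefM : ∀ m : Mn, {w : Wn // (m, w) ∈ E} → {w : Wn // (m, w) ∈ E} → Prop)
    (prefW : ∀ w : Wn, {m : Mn // (m, w) ∈ E} → {m : Mn // (m, w) ∈ E} → Prop)
    (ν : Set (Mn × Wn)) (m : Mn) (w : Wn) (h : (m, w) ∈ E) : Prop :=
  (∀ w', ∀ h' : (m, w') ∈ E, (m, w') ∈ ν → prefM m ⟨w, h⟩ ⟨w', h'⟩) ∧
  (∀ m', ∀ h' : (m', w) ∈ E, (m', w) ∈ ν → prefW w ⟨m, h⟩ ⟨m', h'⟩)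

/-- `ν` is a stable partial matching of the incomplete market on `E`. -/
def IsStable (E : Set (Mn × Wn))
    (prefM : ∀ m : Mn, {w : Wn // (m, w) ∈ E} → {w : Wn // (m, w) ∈ E} → Prop)
    (prefW : ∀ w : Wn, {m : Mn // (m, w) ∈ E} → {m : Mn // (m, w) ∈ E} → Prop)
    (ν : Set (Mn × Wn)) : Prop :=
  IsPartialMatching E ν ∧ ¬ ∃ m, ∃ w, ∃ h : (m, w) ∈ E, Blocks E prefM prefW ν m w h

lemma image_eq_image_of_injOn_of_subset {α β γ δ : Type*} {s : Set γ} {t : Set δ}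
    {f : γ → α} {g : γ → β} {f' : δ → α} {g' : δ → β} (ht : t.Finite)
    (hg : Set.InjOn g s) (hf' : Set.InjOn f' t)
    (hgg' : g '' s ⊆ g' '' t) (hf'f : f' '' t ⊆ f '' s) : f' '' t = f '' s := by
  refine (ht.image f').eq_of_subset_of_encard_le hf'f ?_
  calc (f '' s).encard ≤ s.encard := Set.encard_image_le f s
    _ = (g '' s).encard := hg.encard_image.symm
    _ ≤ (g' '' t).encard := Set.encard_le_encard hgg'
    _ ≤ t.encard := Set.encard_image_le g' t
    _ = (f' '' t).encard := hf'.encard_image.symm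

section Market

variable {M W : Type*} {E ν ν' : Set (M × W)}
  {prefM : ∀ m : M, {w : W // (m, w) ∈ E} → {w : W // (m, w) ∈ E} → Prop}
  {prefW : ∀ w : W, {m : M // (m, w) ∈ E} → {m : M // (m, w) ∈ E} → Prop}

lemma IsPartialMatching.injOn_fst (h : IsPartialMatching E ν) : Set.InjOn Prod.fst ν :=
  fun e₁ he₁ e₂ he₂ heq => h.2 e₁ he₁ e₂ he₂ (Or.inl heq)

lemma IsPartialMatching.injOn_snd (h : IsPartialMatching E ν) : Set.InjOn Prod.snd ν :=
  fun e₁ he₁ e₂ he₂ heq => h.2 e₁ he₁ e₂ he₂ (Or.inr heq)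

lemma IsPartialMatching.swap (h : IsPartialMatching E ν) :
    IsPartialMatching (Prod.swap ⁻¹' E) (Prod.swap ⁻¹' ν) :=
  ⟨Set.preimage_mono h.1, fun e₁ he₁ e₂ he₂ heq =>
    Prod.swap_injective (h.2 e₁.swap he₁ e₂.swap he₂ heq.symm)⟩

lemma IsStable.swap (h : IsStable E prefM prefW ν) :
    IsStable (Prod.swap ⁻¹' E) prefW prefM (Prod.swap ⁻¹' ν) :=
  ⟨h.1.swap, fun ⟨w, m, hE, hblock⟩ => h.2 ⟨m, w, hE, hblock.symm⟩⟩

/-- The edges of `ν` outside `ν'` that are improving over `ν'` for the man: he is unmatched in `ν'`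
or prefers the edge to his partner there. The edges improving for the woman are obtained by applying
this to the market with the sides exchanged, all edge sets being pulled back along `Prod.swap`. -/
def improvingEdges (E : Set (M × W))
    (prefM : ∀ m : M, {w : W // (m, w) ∈ E} → {w : W // (m, w) ∈ E} → Prop)
    (ν ν' : Set (M × W)) : Set (M × W) :=
  {e ∈ ν \ ν' | ∃ h : e ∈ E,
    ∀ w', ∀ h' : (e.1, w') ∈ E, (e.1, w') ∈ ν' → prefM e.1 ⟨e.2, h⟩ ⟨w', h'⟩}

lemma improvingEdges_subset : improvingEdges E prefM ν ν' ⊆ ν :=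
  fun _ he => he.1.1

lemma mem_improvingEdges_of_unmatched {m : M} {w : W} (hνE : ν ⊆ E) (hmw : (m, w) ∈ ν)
    (hm : m ∉ Prod.fst '' ν') : (m, w) ∈ improvingEdges E prefM ν ν' :=
  have not_mem (w' : W) : (m, w') ∉ ν' := fun hw' => hm ⟨(m, w'), hw', rfl⟩
  ⟨⟨hmw, not_mem w⟩, hνE hmw, fun w' _ hw' => absurd hw' (not_mem w')⟩

lemma IsStable.snd_image_improvingEdges_subset (hν : IsPartialMatching E ν)
    (hν' : IsStable E prefM prefW ν') (hW : ∀ w, Std.Trichotomous (prefW w)) :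
    Prod.snd '' improvingEdges E prefM ν ν' ⊆
      Prod.fst '' improvingEdges (Prod.swap ⁻¹' E) prefW (Prod.swap ⁻¹' ν') (Prod.swap ⁻¹' ν) := by
  rintro _ ⟨⟨m, w⟩, ⟨⟨hmw, hmw'⟩, hE, hprefers⟩, rfl⟩
  obtain ⟨m', hE', hm'w, hrejects⟩ : ∃ m', ∃ hE' : (m', w) ∈ E,
      (m', w) ∈ ν' ∧ ¬ prefW w ⟨m, hE⟩ ⟨m', hE'⟩ := by
    by_contra! hdesires
    exact hν'.2 ⟨m, w, hE, hprefers, hdesires⟩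
  have eq_of_mem {m₁ : M} (h₁ : (m₁, w) ∈ ν) : m₁ = m :=
    congrArg Prod.fst (hν.injOn_snd h₁ hmw rfl)
  have hne : m' ≠ m := fun h => hmw' (h ▸ hm'w)
  refine ⟨(w, m'), ⟨⟨hm'w, fun h => hne (eq_of_mem h)⟩, hE', fun m₁ hE₁ h₁ => ?_⟩, rfl⟩
  obtain rfl := eq_of_mem h₁
  by_contra hnot
  exact hne (congrArg Subtype.val ((hW w).trichotomous _ _ hnot hrejects))

lemma IsStable.fst_image_subset (hν : IsStable E prefM prefW ν) (hν' : IsStable E prefM prefW ν')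
    (hM : ∀ m, Std.Trichotomous (prefM m)) (hW : ∀ w, Std.Trichotomous (prefW w))
    (hfin : ν'.Finite) : Prod.fst '' ν ⊆ Prod.fst '' ν' := by
  rintro _ ⟨⟨m, w⟩, hmw, rfl⟩
  by_contra hm
  have men_eq : Prod.snd '' improvingEdges (Prod.swap ⁻¹' E) prefW
      (Prod.swap ⁻¹' ν') (Prod.swap ⁻¹' ν) = Prod.fst '' improvingEdges E prefM ν ν' :=
    image_eq_image_of_injOn_of_subset
      ((hfin.preimage Prod.swap_injective.injOn).subset improvingEdges_subset)
      (hν.1.injOn_snd.mono improvingEdges_subset)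
      (hν'.1.swap.injOn_snd.mono improvingEdges_subset)
      (hν'.snd_image_improvingEdges_subset hν.1 hW)
      (hν.swap.snd_image_improvingEdges_subset hν'.1.swap hM)
  have hm_mem : m ∈ Prod.fst '' improvingEdges E prefM ν ν' :=
    ⟨(m, w), mem_improvingEdges_of_unmatched hν.1.1 hmw hm, rfl⟩
  rw [← men_eq] at hm_mem
  obtain ⟨e, he, rfl⟩ := hm_mem
  have he_mem : e ∈ Prod.swap ⁻¹' ν' := improvingEdges_subset he
  exact hm ⟨e.swap, he_mem, rfl⟩

lemma IsStable.fst_image_eq (hν : IsStable E prefM prefW ν) (hν' : IsStable E prefM prefW ν')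
    (hM : ∀ m, Std.Trichotomous (prefM m)) (hW : ∀ w, Std.Trichotomous (prefW w))
    (hfin : ν.Finite) : Prod.fst '' ν = Prod.fst '' ν' := by
  have hsub : Prod.fst '' ν' ⊆ Prod.fst '' ν := hν'.fst_image_subset hν hM hW hfin
  have hfin' : ν'.Finite := ((hfin.image _).subset hsub).of_finite_image hν'.1.injOn_fst
  exact (hν.fst_image_subset hν' hM hW hfin').antisymm hsub

theorem stable_same_matched_set_general (E : Set (M × W))
    (prefM : ∀ m : M, {w : W // (m, w) ∈ E} → {w : W // (m, w) ∈ E} → Prop)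
    (prefW : ∀ w : W, {m : M // (m, w) ∈ E} → {m : M // (m, w) ∈ E} → Prop)
    (hM : ∀ m, Std.Trichotomous (prefM m)) (hW : ∀ w, Std.Trichotomous (prefW w))
    (ν₁ ν₂ : Set (M × W)) (hfin : ν₁.Finite)
    (h₁ : IsStable E prefM prefW ν₁) (h₂ : IsStable E prefM prefW ν₂) :
    (∀ m : M, (∃ w, (m, w) ∈ ν₁) ↔ (∃ w, (m, w) ∈ ν₂)) ∧
    (∀ w : W, (∃ m, (m, w) ∈ ν₁) ↔ (∃ m, (m, w) ∈ ν₂)) := by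
  have men_eq : Prod.fst '' ν₁ = Prod.fst '' ν₂ := h₁.fst_image_eq h₂ hM hW hfin
  have women_eq : Prod.fst '' (Prod.swap ⁻¹' ν₁) = Prod.fst '' (Prod.swap ⁻¹' ν₂) :=
    h₁.swap.fst_image_eq h₂.swap hW hM (hfin.preimage Prod.swap_injective.injOn)
  exact ⟨fun m => by simpa using Set.ext_iff.mp men_eq m,
    fun w => by simpa using Set.ext_iff.mp women_eq w⟩

end Market

/-- In a matching market with unacceptable partners, the set of matched people is the same in
every stable matching: if `ν₁` and `ν₂` are stable partial matchings, then the same men and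
the same women are matched in both. -/
theorem stable_same_matched_set (E : Set (Mn × Wn))
    (prefM : ∀ m : Mn, {w : Wn // (m, w) ∈ E} → {w : Wn // (m, w) ∈ E} → Prop)
    (prefW : ∀ w : Wn, {m : Mn // (m, w) ∈ E} → {m : Mn // (m, w) ∈ E} → Prop)
    (hM : ∀ m, IsStrictTotalOrder _ (prefM m)) (hW : ∀ w, IsStrictTotalOrder _ (prefW w))
    (ν₁ ν₂ : Set (Mn × Wn))
    (h₁ : IsStable E prefM prefW ν₁) (h₂ : IsStable E prefM prefW ν₂) :
    (∀ m : Mn, (∃ w, (m, w) ∈ ν₁) ↔ (∃ w, (m, w) ∈ ν₂)) ∧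
    (∀ w : Wn, (∃ m, (m, w) ∈ ν₁) ↔ (∃ m, (m, w) ∈ ν₂)) :=
  stable_same_matched_set_general E prefM prefW (fun m => (hM m).toTrichotomous)
    (fun w => (hW w).toTrichotomous) ν₁ ν₂ ν₁.toFinite h₁ h₂

end
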